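/- arXiv:2405.03508 — 2 statements merged into one kernel-verified Lean document; each statement's English description precedes it below -/
import Mathlib

section
/- The specialization K̃(x,Y,1/S(x,y)) is irreducible as a polynomial in Y with coefficients in k(x), and the specialization K̃(X,y,1/S(x,y)) is irreducible as a polynomial in X with coefficients in k(y). -/
open IntermediateField
open scoped BigOperators Classical

set_option synthInstance.maxHeartbeats 1000000
set_option maxHeartbeats 1600000

noncomputable section

namespace QuadrantWalk

variable {K : Type} [Field K] [Algebra ℂ K]

/-- Evaluation of the step (Laurent) polynomial `S(X,Y) = ∑ w_{i,j} X^i Y^j`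
    at a pair of elements of a field. -/
def stepEval (St : Finset (ℤ × ℤ)) (w : ℤ × ℤ → ℂ) (u v : K) : K :=
  ∑ p ∈ St, algebraMap ℂ K (w p) * u ^ p.1 * v ^ p.2

/-- The step polynomial involves both `X` and `Y`. -/
def NotUnivariate (St : Finset (ℤ × ℤ)) : Prop :=
  (∃ p ∈ St, ∃ q ∈ St, p.1 ≠ q.1) ∧ ∃ p ∈ St, ∃ q ∈ St, p.2 ≠ q.2

/-- The kernel polynomial `K̃(X,Y,t) = X^mx * Y^my * (1 - t·S(X,Y))` as an element of
`ℂ[X,Y,t]`, with variables `0 ↦ X`, `1 ↦ Y`, `2 ↦ t`. -/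
def kernelPoly (St : Finset (ℤ × ℤ)) (w : ℤ × ℤ → ℂ) (mx my : ℕ) :
    MvPolynomial (Fin 3) ℂ :=
  MvPolynomial.X 0 ^ mx * MvPolynomial.X 1 ^ my -
    MvPolynomial.X 2 *
      ∑ p ∈ St, MvPolynomial.C (w p) *
        MvPolynomial.X 0 ^ (p.1 + (mx : ℤ)).toNat *
        MvPolynomial.X 1 ^ (p.2 + (my : ℤ)).toNat

/-- `-mx` (resp. `-my`) is the smallest `X`-exponent (resp. `Y`-exponent) of the model. -/
structure ExponentBounds (St : Finset (ℤ × ℤ)) (mx my : ℕ) : Prop where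
  lowerX : ∀ p ∈ St, -(mx : ℤ) ≤ p.1
  lowerY : ∀ p ∈ St, -(my : ℤ) ≤ p.2
  attainX : ∃ p ∈ St, p.1 = -(mx : ℤ)
  attainY : ∃ p ∈ St, p.2 = -(my : ℤ)

/-- `x`-adjacency : equal first coordinates and equal values of `S`. -/
def XAdj (St : Finset (ℤ × ℤ)) (w : ℤ × ℤ → ℂ) (a b : K × K) : Prop :=
  a.1 = b.1 ∧ stepEval St w a.1 a.2 = stepEval St w b.1 b.2

/-- `y`-adjacency : equal second coordinates and equal values of `S`. -/
def YAdj (St : Finset (ℤ × ℤ)) (w : ℤ × ℤ → ℂ) (a b : K × K) : Prop :=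
  a.2 = b.2 ∧ stepEval St w a.1 a.2 = stepEval St w b.1 b.2

/-- Adjacency. -/
def Adj (St : Finset (ℤ × ℤ)) (w : ℤ × ℤ → ℂ) (a b : K × K) : Prop :=
  XAdj St w a b ∨ YAdj St w a b

/-- The orbit of the walk: the equivalence class of `(x,y)` under the
reflexive-transitive closure of adjacency. -/
def orbit (St : Finset (ℤ × ℤ)) (w : ℤ × ℤ → ℂ) (x y : K) : Set (K × K) :=
  {a | Relation.ReflTransGen (Adj St w) (x, y) a}

/-- `k = ℂ(S(x,y))`. -/
def kF (St : Finset (ℤ × ℤ)) (w : ℤ × ℤ → ℂ) (x y : K) : IntermediateField ℂ K :=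
  adjoin ℂ {stepEval St w x y}

/-- `k(x) = ℂ(x, S(x,y))`. -/
def kxF (St : Finset (ℤ × ℤ)) (w : ℤ × ℤ → ℂ) (x y : K) : IntermediateField ℂ K :=
  adjoin ℂ {x, stepEval St w x y}

/-- `k(y) = ℂ(y, S(x,y))`. -/
def kyF (St : Finset (ℤ × ℤ)) (w : ℤ × ℤ → ℂ) (x y : K) : IntermediateField ℂ K :=
  adjoin ℂ {y, stepEval St w x y}

/-- `k(x,y) = ℂ(x,y)`. -/
def kxyF (x y : K) : IntermediateField ℂ K := adjoin ℂ {x, y}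

/-- `k(𝒪)`: the subfield generated over `k` by all coordinates of the orbit. -/
def orbitF (St : Finset (ℤ × ℤ)) (w : ℤ × ℤ → ℂ) (x y : K) : IntermediateField ℂ K :=
  adjoin ℂ ({stepEval St w x y} ∪ {z | ∃ a ∈ orbit St w x y, z = a.1 ∨ z = a.2})

/-- The standing hypotheses: nonzero weights, a non-univariate step polynomial,
`x, y` algebraically independent over `ℂ`, and `𝕂` an algebraic closure of `ℂ(x,y)`. -/
structure Setting (St : Finset (ℤ × ℤ)) (w : ℤ × ℤ → ℂ) (x y : K) : Prop where
  weight_ne : ∀ p ∈ St, w p ≠ 0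
  notUniv : NotUnivariate St
  indep : AlgebraicIndependent ℂ ![x, y]
  algClosed : IsAlgClosed K
  algebraic : Algebra.IsAlgebraic (kxyF x y) K

lemma self_mem_orbit (St : Finset (ℤ × ℤ)) (w : ℤ × ℤ → ℂ) (x y : K) :
    (x, y) ∈ orbit St w x y := Relation.ReflTransGen.refl

lemma x_mem_orbitF (St : Finset (ℤ × ℤ)) (w : ℤ × ℤ → ℂ) (x y : K) :
    x ∈ orbitF St w x y := by
  apply subset_adjoin
  exact Set.mem_union_right _ ⟨(x, y), self_mem_orbit St w x y, Or.inl rfl⟩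

lemma y_mem_orbitF (St : Finset (ℤ × ℤ)) (w : ℤ × ℤ → ℂ) (x y : K) :
    y ∈ orbitF St w x y := by
  apply subset_adjoin
  exact Set.mem_union_right _ ⟨(x, y), self_mem_orbit St w x y, Or.inr rfl⟩

lemma S_mem_orbitF (St : Finset (ℤ × ℤ)) (w : ℤ × ℤ → ℂ) (x y : K) :
    stepEval St w x y ∈ orbitF St w x y := by
  apply subset_adjoin
  exact Set.mem_union_left _ rfl

lemma x_mem_kxF (St : Finset (ℤ × ℤ)) (w : ℤ × ℤ → ℂ) (x y : K) :
    x ∈ kxF St w x y :=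
  subset_adjoin ℂ _ (Set.mem_insert _ _)

lemma S_mem_kxF (St : Finset (ℤ × ℤ)) (w : ℤ × ℤ → ℂ) (x y : K) :
    stepEval St w x y ∈ kxF St w x y :=
  subset_adjoin ℂ _ (Set.mem_insert_of_mem _ rfl)

lemma y_mem_kyF (St : Finset (ℤ × ℤ)) (w : ℤ × ℤ → ℂ) (x y : K) :
    y ∈ kyF St w x y :=
  subset_adjoin ℂ _ (Set.mem_insert _ _)

lemma S_mem_kyF (St : Finset (ℤ × ℤ)) (w : ℤ × ℤ → ℂ) (x y : K) :
    stepEval St w x y ∈ kyF St w x y :=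
  subset_adjoin ℂ _ (Set.mem_insert_of_mem _ rfl)

/-- The subgroup of `ℂ`-automorphisms of `M` fixing the subfield `E` pointwise. -/
def fixingAuts (E M : IntermediateField ℂ K) : Subgroup (↥M ≃ₐ[ℂ] ↥M) where
  carrier := {σ | ∀ (z : K) (_ : z ∈ E) (hzM : z ∈ M), σ ⟨z, hzM⟩ = ⟨z, hzM⟩}
  one_mem' := fun _ _ _ => rfl
  mul_mem' := by
    intro σ τ hσ hτ z hzE hzM
    show σ (τ ⟨z, hzM⟩) = ⟨z, hzM⟩
    rw [hτ z hzE hzM, hσ z hzE hzM]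
  inv_mem' := by
    intro σ hσ z hzE hzM
    show σ.symm ⟨z, hzM⟩ = ⟨z, hzM⟩
    conv_lhs => rw [← hσ z hzE hzM]
    exact σ.symm_apply_apply _

/-- The Galois group `G_x = Gal(k(𝒪)|k(x))`. -/
def Gx (St : Finset (ℤ × ℤ)) (w : ℤ × ℤ → ℂ) (x y : K) :
    Subgroup (↥(orbitF St w x y) ≃ₐ[ℂ] ↥(orbitF St w x y)) :=
  fixingAuts (kxF St w x y) (orbitF St w x y)

/-- The Galois group `G_y = Gal(k(𝒪)|k(y))`. -/
def Gy (St : Finset (ℤ × ℤ)) (w : ℤ × ℤ → ℂ) (x y : K) :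
    Subgroup (↥(orbitF St w x y) ≃ₐ[ℂ] ↥(orbitF St w x y)) :=
  fixingAuts (kyF St w x y) (orbitF St w x y)

/-- The Galois group `G_{xy} = Gal(k(𝒪)|k(x,y))`. -/
def Gxy (St : Finset (ℤ × ℤ)) (w : ℤ × ℤ → ℂ) (x y : K) :
    Subgroup (↥(orbitF St w x y) ≃ₐ[ℂ] ↥(orbitF St w x y)) :=
  fixingAuts (kxyF x y) (orbitF St w x y)

/-- Extend an automorphism of an intermediate field to a map on all of `K`
(by the identity outside). -/
def extendAut {M : IntermediateField ℂ K} (σ : ↥M ≃ₐ[ℂ] ↥M) (z : K) : K :=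
  if h : z ∈ M then (σ ⟨z, h⟩ : K) else z

/-- The coordinate-wise action of an automorphism on a `0`-chain. -/
def actChain {M : IntermediateField ℂ K} (σ : ↥M ≃ₐ[ℂ] ↥M)
    (γ : (K × K) →₀ ℂ) : (K × K) →₀ ℂ :=
  Finsupp.mapDomain (Prod.map (extendAut σ) (extendAut σ)) γ

/-- Evaluation of a polynomial `P(X,Y,t)` at `(u, v, 1/S(x,y))` for `(u,v) = a`. -/
def evalPt (St : Finset (ℤ × ℤ)) (w : ℤ × ℤ → ℂ) (x y : K)
    (P : MvPolynomial (Fin 3) ℂ) (a : K × K) : K :=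
  MvPolynomial.aeval ![a.1, a.2, (stepEval St w x y)⁻¹] P

/-- Evaluation of a polynomial `P(X,Y,t)` at `(x, y, 1/S(x,y))`. -/
def evalXY (St : Finset (ℤ × ℤ)) (w : ℤ × ℤ → ℂ) (x y : K)
    (P : MvPolynomial (Fin 3) ℂ) : K :=
  evalPt St w x y P (x, y)

/-- Evaluation of the fraction `A/B` at `(a.1, a.2, 1/S(x,y))`. -/
def fracEval (St : Finset (ℤ × ℤ)) (w : ℤ × ℤ → ℂ) (x y : K)
    (A B : MvPolynomial (Fin 3) ℂ) (a : K × K) : K :=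
  evalPt St w x y A a / evalPt St w x y B a

/-- Evaluation (orbit sum) of the fraction `A/B` on a `0`-chain. -/
def chainEval (St : Finset (ℤ × ℤ)) (w : ℤ × ℤ → ℂ) (x y : K)
    (A B : MvPolynomial (Fin 3) ℂ) (γ : (K × K) →₀ ℂ) : K :=
  γ.sum fun a c => algebraMap ℂ K c * fracEval St w x y A B a

/-- A `0`-chain cancels decoupled fractions: the orbit sum of every regular fraction
of the form `F(X,t) + G(Y,t)` on it vanishes. -/
def CancelsDecoupled (St : Finset (ℤ × ℤ)) (w : ℤ × ℤ → ℂ) (mx my : ℕ)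
    (x y : K) (α : (K × K) →₀ ℂ) : Prop :=
  ∀ A₁ B₁ A₂ B₂ : MvPolynomial (Fin 3) ℂ,
    A₁ ∈ MvPolynomial.supported ℂ ({0, 2} : Set (Fin 3)) →
    B₁ ∈ MvPolynomial.supported ℂ ({0, 2} : Set (Fin 3)) →
    A₂ ∈ MvPolynomial.supported ℂ ({1, 2} : Set (Fin 3)) →
    B₂ ∈ MvPolynomial.supported ℂ ({1, 2} : Set (Fin 3)) →
    ¬ kernelPoly St w mx my ∣ B₁ → ¬ kernelPoly St w mx my ∣ B₂ →
    (α.sum fun a c =>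
      algebraMap ℂ K c * (fracEval St w x y A₁ B₁ a + fracEval St w x y A₂ B₂ a)) = 0

/-- The field of fractions `ℂ(X,Y,t)`. -/
abbrev FF : Type := FractionRing (MvPolynomial (Fin 3) ℂ)

/-- The inclusion of `ℂ[X,Y,t]` into `ℂ(X,Y,t)`. -/
def toFF (P : MvPolynomial (Fin 3) ℂ) : FF := algebraMap (MvPolynomial (Fin 3) ℂ) FF P

/-- The regular fraction `A/B` admits a Galois decoupling:
`A/B = F + G + K̃·R` with `F ∈ ℂ(X,t)`, `G ∈ ℂ(Y,t)` and `R` regular. -/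
def AdmitsDecoupling (St : Finset (ℤ × ℤ)) (w : ℤ × ℤ → ℂ) (mx my : ℕ)
    (A B : MvPolynomial (Fin 3) ℂ) : Prop :=
  ∃ F₁ F₂ G₁ G₂ R₁ R₂ : MvPolynomial (Fin 3) ℂ,
    F₁ ∈ MvPolynomial.supported ℂ ({0, 2} : Set (Fin 3)) ∧
    F₂ ∈ MvPolynomial.supported ℂ ({0, 2} : Set (Fin 3)) ∧
    G₁ ∈ MvPolynomial.supported ℂ ({1, 2} : Set (Fin 3)) ∧
    G₂ ∈ MvPolynomial.supported ℂ ({1, 2} : Set (Fin 3)) ∧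
    ¬ kernelPoly St w mx my ∣ F₂ ∧ ¬ kernelPoly St w mx my ∣ G₂ ∧
    ¬ kernelPoly St w mx my ∣ R₂ ∧
    toFF A / toFF B =
      toFF F₁ / toFF F₂ + toFF G₁ / toFF G₂ +
        toFF (kernelPoly St w mx my) * (toFF R₁ / toFF R₂)

/-- `(I, J) = (A/B, Cc/D)` is a pair of Galois invariants: `I - J = K̃·R` with `R` regular. -/
def IsInvariantPair (St : Finset (ℤ × ℤ)) (w : ℤ × ℤ → ℂ) (mx my : ℕ)
    (A B Cc D : MvPolynomial (Fin 3) ℂ) : Prop :=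
  ∃ R₁ R₂ : MvPolynomial (Fin 3) ℂ, ¬ kernelPoly St w mx my ∣ R₂ ∧
    toFF A / toFF B - toFF Cc / toFF D =
      toFF (kernelPoly St w mx my) * (toFF R₁ / toFF R₂)

/-- A constant pair of Galois invariants: both members are equivalent to a
common fraction `c ∈ ℂ(t)` modulo `K̃`. -/
def IsConstantPair (St : Finset (ℤ × ℤ)) (w : ℤ × ℤ → ℂ) (mx my : ℕ)
    (A B Cc D : MvPolynomial (Fin 3) ℂ) : Prop :=
  IsInvariantPair St w mx my A B Cc D ∧
  ∃ c₁ c₂ : MvPolynomial (Fin 3) ℂ,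
    c₁ ∈ MvPolynomial.supported ℂ ({2} : Set (Fin 3)) ∧
    c₂ ∈ MvPolynomial.supported ℂ ({2} : Set (Fin 3)) ∧ c₂ ≠ 0 ∧
    IsInvariantPair St w mx my A B c₁ c₂ ∧ IsInvariantPair St w mx my Cc D c₁ c₂

/-- `(γx, γy)` is a pseudo-decoupling of `(x,y)`. -/
def PseudoDecoupling (St : Finset (ℤ × ℤ)) (w : ℤ × ℤ → ℂ) (mx my : ℕ)
    (x y : K) (γx γy : (K × K) →₀ ℂ) : Prop :=
  ∀ A B : MvPolynomial (Fin 3) ℂ, ¬ kernelPoly St w mx my ∣ B →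
    AdmitsDecoupling St w mx my A B →
      fracEval St w x y A B (x, y) =
          chainEval St w x y A B γx + chainEval St w x y A B γy ∧
        chainEval St w x y A B γx ∈ kxF St w x y ∧
        chainEval St w x y A B γy ∈ kyF St w x y

/-- `(gx, gy, a)` is a decoupling of `(x,y)` in the orbit. -/
def IsDecoupling (St : Finset (ℤ × ℤ)) (w : ℤ × ℤ → ℂ) (mx my : ℕ)
    (x y : K) (gx gy a : (K × K) →₀ ℂ) : Prop :=
  Finsupp.single (x, y) (1 : ℂ) = gx + gy + a ∧
  (∀ σ ∈ Gx St w x y, actChain σ gx = gx) ∧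
  (∀ σ ∈ Gy St w x y, actChain σ gy = gy) ∧
  CancelsDecoupled St w mx my x y a

/-- The `x`-part of the boundary of a `1`-chain. -/
def boundaryX (St : Finset (ℤ × ℤ)) (w : ℤ × ℤ → ℂ)
    (c : ((K × K) × (K × K)) →₀ ℂ) : (K × K) →₀ ℂ :=
  c.sum fun e coeff =>
    if XAdj St w e.1 e.2 then
      coeff • (Finsupp.single e.2 (1 : ℂ) - Finsupp.single e.1 (1 : ℂ)) else 0

/-- The `y`-part of the boundary of a `1`-chain. -/
def boundaryY (St : Finset (ℤ × ℤ)) (w : ℤ × ℤ → ℂ)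
    (c : ((K × K) × (K × K)) →₀ ℂ) : (K × K) →₀ ℂ :=
  c.sum fun e coeff =>
    if YAdj St w e.1 e.2 then
      coeff • (Finsupp.single e.2 (1 : ℂ) - Finsupp.single e.1 (1 : ℂ)) else 0

/-- The `0`-chain induced by a bicolored loop. -/
def IsBicoloredChain (St : Finset (ℤ × ℤ)) (w : ℤ × ℤ → ℂ) (x y : K)
    (α : (K × K) →₀ ℂ) : Prop :=
  ∃ (n : ℕ) (b : ℕ → K × K), 0 < n ∧ b (2 * n) = b 0 ∧
    (∀ j < 2 * n, b j ∈ orbit St w x y) ∧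
    (∀ i < n, XAdj St w (b (2 * i)) (b (2 * i + 1)) ∧
      YAdj St w (b (2 * i + 1)) (b (2 * i + 2))) ∧
    α = ∑ j ∈ Finset.range (2 * n), ((-1 : ℂ) ^ (j + 1)) • Finsupp.single (b j) (1 : ℂ)

/-- The `0`-chain `ω = (1/|𝒪|) ∑_{a ∈ 𝒪} a`. -/
def omegaChain (St : Finset (ℤ × ℤ)) (w : ℤ × ℤ → ℂ) (x y : K)
    (h : (orbit St w x y).Finite) : (K × K) →₀ ℂ :=
  ((h.toFinset.card : ℂ))⁻¹ • ∑ a ∈ h.toFinset, Finsupp.single a (1 : ℂ)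

/-- The average `[G]·γ = (1/|G|) ∑_{σ ∈ G} σ·γ` of a `0`-chain under a group. -/
def groupAverage {M : IntermediateField ℂ K} (G : Subgroup (↥M ≃ₐ[ℂ] ↥M))
    (γ : (K × K) →₀ ℂ) : (K × K) →₀ ℂ :=
  ((Nat.card G : ℂ))⁻¹ • ∑ᶠ σ ∈ (G : Set (↥M ≃ₐ[ℂ] ↥M)), actChain σ γ

/-- `ℂ[X,t]` (two variables: `0` and `1`). -/
abbrev MvP2 : Type := MvPolynomial (Fin 2) ℂ

/-- `ℂ(X,t)`, the fraction field of `ℂ[X,t]`. -/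
abbrev CXt : Type := FractionRing MvP2

/-- Constants `ℂ → ℂ(X,t)`. -/
def cconst : ℂ →+* CXt := (algebraMap MvP2 CXt).comp (MvPolynomial.C)

/-- The first generator of `ℂ(X,t)`. -/
def gen0 : CXt := algebraMap MvP2 CXt (MvPolynomial.X 0)

/-- The second generator of `ℂ(X,t)`. -/
def gen1 : CXt := algebraMap MvP2 CXt (MvPolynomial.X 1)

/-- The kernel polynomial viewed as a polynomial in `Y` over `ℂ(X,t)`. -/
def kernelInY (St : Finset (ℤ × ℤ)) (w : ℤ × ℤ → ℂ) (mx my : ℕ) :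
    Polynomial CXt :=
  MvPolynomial.eval₂ ((Polynomial.C : CXt →+* Polynomial CXt).comp cconst)
    ![Polynomial.C gen0, Polynomial.X, Polynomial.C gen1]
    (kernelPoly St w mx my)

/-- The kernel polynomial viewed as a polynomial in `X` over `ℂ(Y,t)`. -/
def kernelInX (St : Finset (ℤ × ℤ)) (w : ℤ × ℤ → ℂ) (mx my : ℕ) :
    Polynomial CXt :=
  MvPolynomial.eval₂ ((Polynomial.C : CXt →+* Polynomial CXt).comp cconst)
    ![Polynomial.X, Polynomial.C gen0, Polynomial.C gen1]
    (kernelPoly St w mx my)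

/-- The kernel polynomial viewed as a polynomial in `X, Y` over `ℂ(t)`. -/
def kernelInXY (St : Finset (ℤ × ℤ)) (w : ℤ × ℤ → ℂ) (mx my : ℕ) :
    MvPolynomial (Fin 2) (RatFunc ℂ) :=
  MvPolynomial.eval₂
    ((MvPolynomial.C : RatFunc ℂ →+* MvPolynomial (Fin 2) (RatFunc ℂ)).comp
      (RatFunc.C : ℂ →+* RatFunc ℂ))
    ![MvPolynomial.X 0, MvPolynomial.X 1, MvPolynomial.C RatFunc.X]
    (kernelPoly St w mx my)

/-- The specialization `K̃(x, Y, 1/S(x,y))` as a polynomial in `Y` over `k(x)`. -/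
def kernelAtX (St : Finset (ℤ × ℤ)) (w : ℤ × ℤ → ℂ) (mx my : ℕ) (x y : K) :
    Polynomial ↥(kxF St w x y) :=
  MvPolynomial.aeval
    ![Polynomial.C (⟨x, x_mem_kxF St w x y⟩ : kxF St w x y), Polynomial.X,
      Polynomial.C (⟨(stepEval St w x y)⁻¹, inv_mem (S_mem_kxF St w x y)⟩ : kxF St w x y)]
    (kernelPoly St w mx my)

/-- The specialization `K̃(X, y, 1/S(x,y))` as a polynomial in `X` over `k(y)`. -/
def kernelAtY (St : Finset (ℤ × ℤ)) (w : ℤ × ℤ → ℂ) (mx my : ℕ) (x y : K) :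
    Polynomial ↥(kyF St w x y) :=
  MvPolynomial.aeval
    ![Polynomial.X, Polynomial.C (⟨y, y_mem_kyF St w x y⟩ : kyF St w x y),
      Polynomial.C (⟨(stepEval St w x y)⁻¹, inv_mem (S_mem_kyF St w x y)⟩ : kyF St w x y)]
    (kernelPoly St w mx my)

/-- Values of regular fractions with numerator and denominator supported on a set
of variables. -/
def regRange (St : Finset (ℤ × ℤ)) (w : ℤ × ℤ → ℂ) (x y : K) (mx my : ℕ)
    (s : Set (Fin 3)) : Set K :=
  {z | ∃ A B : MvPolynomial (Fin 3) ℂ,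
    A ∈ MvPolynomial.supported ℂ s ∧ B ∈ MvPolynomial.supported ℂ s ∧
    ¬ kernelPoly St w mx my ∣ B ∧ z = evalXY St w x y A / evalXY St w x y B}

end QuadrantWalk
namespace QuadrantWalk

section Transcendence

open scoped IntermediateField.algebraAdjoinAdjoin

variable {k L : Type*} [Field k] [Field L] [Algebra k L]

lemma algebraicIndependent_pair_iff {a b : L} :
    AlgebraicIndependent k ![a, b] ↔ Transcendental k a ∧ Transcendental k⟮a⟯ b := by
  have h := AlgebraicIndependent.option_iff (R := k) (x := fun _ : Unit => a) (a := b)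
  rw [Set.range_const, algebraicIndependent_unique_type_iff (x := fun _ : Unit => a)] at h
  have hfrac : Transcendental (Algebra.adjoin k {a}) b ↔ Transcendental k⟮a⟯ b :=
    not_congr (IsFractionRing.isAlgebraic_iff (Algebra.adjoin k {a}) k⟮a⟯ L)
  rw [← hfrac, ← h]
  let e : Fin 2 ≃ Option Unit :=
    ⟨![some (), none], fun o => o.elim 1 fun _ => 0,
      fun i => by fin_cases i <;> rfl, fun o => by rcases o with _ | _ <;> rfl⟩
  rw [← algebraicIndependent_equiv e]
  have : ((fun o : Option Unit => o.elim b fun _ => a) ∘ e) = ![a, b] := by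
    ext i; fin_cases i <;> rfl
  rw [this]

/-- An irreducible polynomial that involves its first variable stays irreducible when the two
other variables are replaced by algebraically independent generators of a field. -/
lemma irreducible_aeval_of_algebraicIndependent (a b : L)
    (hab : AlgebraicIndependent k ![a, b]) (hgen : k⟮a, b⟯ = ⊤)
    (P : MvPolynomial (Fin 3) k) (hP : Irreducible P) (hdeg : P.degreeOf 0 ≠ 0) :
    Irreducible (MvPolynomial.aeval
      ![Polynomial.X, Polynomial.C a, Polynomial.C b] P : Polynomial L) := by
  let φ : MvPolynomial (Fin 2) k →ₐ[k] L := MvPolynomial.aeval ![a, b]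
  algebraize [φ.toRingHom]
  have : IsFractionRing (MvPolynomial (Fin 2) k) L := by
    have : FaithfulSMul (MvPolynomial (Fin 2) k) L :=
      (faithfulSMul_iff_algebraMap_injective _ _).2 hab
    refine .of_field _ _ fun z => ?_
    have hz : z ∈ adjoin k (Set.range ![a, b]) := by
      rw [Matrix.range_cons, Matrix.range_cons, Matrix.range_empty, Set.union_empty]
      change z ∈ k⟮a, b⟯
      rw [hgen]; trivial
    obtain ⟨r, s, h⟩ := (mem_adjoin_range_iff k _ z).1 hz
    exact ⟨r, s, h⟩
  have hirr : Irreducible (MvPolynomial.finSuccEquiv k 2 P) :=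
    (MulEquiv.irreducible_iff (MvPolynomial.finSuccEquiv k 2)).2 hP
  have hprim := hirr.isPrimitive (by rwa [MvPolynomial.natDegree_finSuccEquiv])
  have hmapped := (hprim.irreducible_iff_irreducible_map_fraction_map (K := L)).1 hirr
  convert hmapped using 1
  have : (MvPolynomial.aeval ![Polynomial.X, Polynomial.C a, Polynomial.C b] :
      MvPolynomial (Fin 3) k →ₐ[k] Polynomial L) =
      (Polynomial.mapAlgHom φ).comp (MvPolynomial.finSuccEquiv k 2).toAlgHom := by
    ext i : 1
    refine Fin.cases ?_ (fun j => ?_) i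
    · simp [MvPolynomial.finSuccEquiv_X_zero]
    · simp only [AlgHom.comp_apply, AlgEquiv.toAlgHom_apply, MvPolynomial.finSuccEquiv_X_succ]
      fin_cases j <;> simp [φ]
  rw [this]
  rfl

lemma transcendental_inv {c : L} (hc : Transcendental k c) : Transcendental k c⁻¹ :=
  fun h => hc (by simpa using h.inv)

end Transcendence

section KernelPoly

variable {St : Finset (ℤ × ℤ)} {w : ℤ × ℤ → ℂ} {mx my : ℕ}

/-- The exponent of the monomial of `X^mx * Y^my * S` coming from the step `p`. -/
def stepExp (mx my : ℕ) (p : ℤ × ℤ) : Fin 3 →₀ ℕ :=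
  Finsupp.single 0 (p.1 + (mx : ℤ)).toNat + Finsupp.single 1 (p.2 + (my : ℤ)).toNat

/-- The polynomial `X^mx * Y^my * S`. -/
def stepNumerator (St : Finset (ℤ × ℤ)) (w : ℤ × ℤ → ℂ) (mx my : ℕ) :
    MvPolynomial (Fin 3) ℂ :=
  ∑ p ∈ St, MvPolynomial.monomial (stepExp mx my p) (w p)

@[simp] lemma stepExp_zero (p : ℤ × ℤ) : stepExp mx my p 0 = (p.1 + (mx : ℤ)).toNat := by
  simp [stepExp]

@[simp] lemma stepExp_one (p : ℤ × ℤ) : stepExp mx my p 1 = (p.2 + (my : ℤ)).toNat := by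
  simp [stepExp]

@[simp] lemma stepExp_two (p : ℤ × ℤ) : stepExp mx my p 2 = 0 := by
  simp [stepExp]

lemma kernelPoly_eq :
    kernelPoly St w mx my = -stepNumerator St w mx my * MvPolynomial.X 2 +
      MvPolynomial.X 0 ^ mx * MvPolynomial.X 1 ^ my := by
  have : stepNumerator St w mx my = ∑ p ∈ St, MvPolynomial.C (w p) *
        MvPolynomial.X 0 ^ (p.1 + (mx : ℤ)).toNat *
        MvPolynomial.X 1 ^ (p.2 + (my : ℤ)).toNat := by
    refine Finset.sum_congr rfl fun p _ => ?_
    rw [stepExp, MvPolynomial.X_pow_eq_monomial, MvPolynomial.X_pow_eq_monomial, mul_assoc,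
      MvPolynomial.monomial_mul, MvPolynomial.C_mul_monomial]
    simp
  rw [this, kernelPoly]
  ring

lemma coeff_stepNumerator (hb : ExponentBounds St mx my) {q : ℤ × ℤ} (hq : q ∈ St) :
    (stepNumerator St w mx my).coeff (stepExp mx my q) = w q := by
  rw [stepNumerator, MvPolynomial.coeff_sum, Finset.sum_eq_single q _ (absurd hq)]
  · simp
  · intro p hp hpq
    rw [MvPolynomial.coeff_monomial, if_neg]
    intro h
    have h0 := DFunLike.congr_fun h 0
    have h1 := DFunLike.congr_fun h 1
    have := hb.lowerX p hp
    have := hb.lowerX q hq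
    have := hb.lowerY p hp
    have := hb.lowerY q hq
    simp only [stepExp_zero, stepExp_one] at h0 h1
    exact hpq (Prod.ext (by lia) (by lia))

lemma not_X_dvd_of_coeff_ne_zero {σ R : Type*} [CommRing R] {f : MvPolynomial σ R} {i : σ}
    {m : σ →₀ ℕ} (hm : m i = 0) (hf : f.coeff m ≠ 0) : ¬ MvPolynomial.X i ∣ f := by
  classical
  rintro ⟨g, rfl⟩
  refine hf ?_
  rw [MvPolynomial.coeff_X_mul', if_neg]
  simpa using hm

lemma irreducible_kernelPoly (hw : ∀ p ∈ St, w p ≠ 0) (hb : ExponentBounds St mx my) :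
    Irreducible (kernelPoly St w mx my) := by
  obtain ⟨p, hp, hpx⟩ := hb.attainX
  obtain ⟨q, hq, hqy⟩ := hb.attainY
  have hX : ¬ MvPolynomial.X 0 ∣ stepNumerator St w mx my :=
    not_X_dvd_of_coeff_ne_zero (m := stepExp mx my p) (by simp [hpx])
      (by rw [coeff_stepNumerator hb hp]; exact hw p hp)
  have hY : ¬ MvPolynomial.X 1 ∣ stepNumerator St w mx my :=
    not_X_dvd_of_coeff_ne_zero (m := stepExp mx my q) (by simp [hqy])
      (by rw [coeff_stepNumerator hb hq]; exact hw q hq)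
  rw [kernelPoly_eq]
  apply MvPolynomial.irreducible_mul_X_add
  · intro h
    exact hX (by rw [neg_eq_zero.1 h]; exact dvd_zero _)
  · rw [MvPolynomial.vars_neg, stepNumerator]
    intro h
    obtain ⟨r, -, hr⟩ := Finset.mem_biUnion.1 (MvPolynomial.vars_sum_subset _ _ h)
    by_cases hwr : w r = 0
    · simp [hwr] at hr
    · simp [MvPolynomial.vars_monomial hwr] at hr
  · intro h
    rcases Finset.mem_union.1 (MvPolynomial.vars_mul _ _ h) with h | h <;>
      simpa using MvPolynomial.vars_pow _ _ h
  · refine IsRelPrime.neg_left (IsRelPrime.mul_right (.pow_right ?_) (.pow_right ?_))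
    · exact (((MvPolynomial.X_prime (i := 0)).irreducible.isRelPrime_iff_not_dvd).2 hX).symm
    · exact (((MvPolynomial.X_prime (i := 1)).irreducible.isRelPrime_iff_not_dvd).2 hY).symm

lemma mem_support_kernelPoly (hw : ∀ p ∈ St, w p ≠ 0) (hb : ExponentBounds St mx my)
    {q : ℤ × ℤ} (hq : q ∈ St) :
    stepExp mx my q + Finsupp.single 2 1 ∈ (kernelPoly St w mx my).support := by
  rw [MvPolynomial.mem_support_iff, kernelPoly_eq, MvPolynomial.coeff_add,
    MvPolynomial.coeff_mul_X, MvPolynomial.coeff_neg, coeff_stepNumerator hb hq,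
    MvPolynomial.X_pow_eq_monomial, MvPolynomial.X_pow_eq_monomial, MvPolynomial.monomial_mul,
    MvPolynomial.coeff_monomial, if_neg]
  · simpa using hw q hq
  · intro h
    simpa using DFunLike.congr_fun h 2

lemma degreeOf_zero_kernelPoly_ne_zero (hw : ∀ p ∈ St, w p ≠ 0) (hS : NotUnivariate St)
    (hb : ExponentBounds St mx my) : (kernelPoly St w mx my).degreeOf 0 ≠ 0 := by
  obtain ⟨p, hp, q, hq, hpq⟩ := hS.1
  have h₁ := MvPolynomial.monomial_le_degreeOf 0 (mem_support_kernelPoly hw hb hp)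
  have h₂ := MvPolynomial.monomial_le_degreeOf 0 (mem_support_kernelPoly hw hb hq)
  have := hb.lowerX p hp
  have := hb.lowerX q hq
  simp at h₁ h₂
  lia

lemma degreeOf_one_kernelPoly_ne_zero (hw : ∀ p ∈ St, w p ≠ 0) (hS : NotUnivariate St)
    (hb : ExponentBounds St mx my) : (kernelPoly St w mx my).degreeOf 1 ≠ 0 := by
  obtain ⟨p, hp, q, hq, hpq⟩ := hS.2
  have h₁ := MvPolynomial.monomial_le_degreeOf 1 (mem_support_kernelPoly hw hb hp)
  have h₂ := MvPolynomial.monomial_le_degreeOf 1 (mem_support_kernelPoly hw hb hq)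
  have := hb.lowerY p hp
  have := hb.lowerY q hq
  simp at h₁ h₂
  lia

end KernelPoly

section StepEval

variable {K : Type} [Field K] [Algebra ℂ K] {St : Finset (ℤ × ℤ)} {w : ℤ × ℤ → ℂ}

lemma stepEval_swap (St : Finset (ℤ × ℤ)) (w : ℤ × ℤ → ℂ) (x y : K) :
    stepEval (St.map (Equiv.prodComm ℤ ℤ).toEmbedding) (w ∘ Prod.swap) y x =
      stepEval St w x y := by
  simp [stepEval, mul_right_comm]

lemma stepEval_mul {mx my : ℕ} (hX : ∀ p ∈ St, -(mx : ℤ) ≤ p.1)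
    (hY : ∀ p ∈ St, -(my : ℤ) ≤ p.2) {x y : K} (hx : x ≠ 0) (hy : y ≠ 0) :
    stepEval St w x y * x ^ mx * y ^ my = ∑ p ∈ St,
      algebraMap ℂ K (w p) * x ^ (p.1 + (mx : ℤ)).toNat * y ^ (p.2 + (my : ℤ)).toNat := by
  rw [stepEval, Finset.sum_mul, Finset.sum_mul]
  refine Finset.sum_congr rfl fun p hp => ?_
  have h₁ : x ^ (p.1 + (mx : ℤ)).toNat = x ^ p.1 * x ^ mx := by
    rw [← zpow_natCast, Int.toNat_of_nonneg (by linarith [hX p hp]), zpow_add₀ hx, zpow_natCast]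
  have h₂ : y ^ (p.2 + (my : ℤ)).toNat = y ^ p.2 * y ^ my := by
    rw [← zpow_natCast, Int.toNat_of_nonneg (by linarith [hY p hp]), zpow_add₀ hy, zpow_natCast]
  rw [h₁, h₂]
  ring

lemma transcendental_stepEval {mx my : ℕ} {x y : K} (hw : ∀ p ∈ St, w p ≠ 0)
    (hS : ∃ p ∈ St, ∃ q ∈ St, p.2 ≠ q.2) (hX : ∀ p ∈ St, -(mx : ℤ) ≤ p.1)
    (hY : ∀ p ∈ St, -(my : ℤ) ≤ p.2) (hxy : AlgebraicIndependent ℂ ![x, y]) :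
    Transcendental ℂ⟮x⟯ (stepEval St w x y) := by
  obtain ⟨hx, hy⟩ := algebraicIndependent_pair_iff.1 hxy
  intro halg
  obtain ⟨q, hq, hq0⟩ : ∃ q ∈ St, q.2 ≠ 0 := by
    obtain ⟨p, hp, q, hq, hpq⟩ := hS
    by_cases h : p.2 = 0
    · exact ⟨q, hq, fun h' => hpq (h.trans h'.symm)⟩
    · exact ⟨p, hp, h⟩
  let E := algebraicClosure ℂ⟮x⟯ K
  let c : E := ⟨stepEval St w x y, mem_algebraicClosure_iff.2 halg⟩
  let u : E := algebraMap ℂ⟮x⟯ E (AdjoinSimple.gen ℂ x)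
  have hyE : Transcendental E y := fun h => hy (h.restrictScalars ℂ⟮x⟯)
  let G : Polynomial E := Polynomial.C (c * u ^ mx) * Polynomial.X ^ my -
    ∑ p ∈ St, Polynomial.C (algebraMap ℂ E (w p) * u ^ (p.1 + (mx : ℤ)).toNat) *
      Polynomial.X ^ (p.2 + (my : ℤ)).toNat
  have hu : algebraMap E K u = x := rfl
  have hE (z : ℂ) : algebraMap E K (algebraMap ℂ E z) = algebraMap ℂ K z := rfl
  have hG : G = 0 := by
    refine (transcendental_iff.1 hyE) G ?_
    have := stepEval_mul (w := w) hX hY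
      (fun h : x = 0 => hx (by rw [h]; exact isAlgebraic_zero))
      (fun h : y = 0 => hy (by rw [h]; exact isAlgebraic_zero))
    simp only [G, map_sub, map_mul, map_sum, map_pow, Polynomial.aeval_C, Polynomial.aeval_X, hu,
      hE]
    rw [← this, sub_eq_zero]
    rfl
  have hcoeff : G.coeff (q.2 + (my : ℤ)).toNat = 0 := by rw [hG, Polynomial.coeff_zero]
  have hne : (q.2 + (my : ℤ)).toNat ≠ my := by have := hY q hq; lia
  simp only [G, Polynomial.coeff_sub, Polynomial.coeff_C_mul, Polynomial.coeff_X_pow, if_neg hne,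
    Polynomial.finsetSum_coeff, mul_zero, zero_sub, neg_eq_zero] at hcoeff
  let H : Polynomial ℂ := ∑ p ∈ St, Polynomial.C (w p) *
    Polynomial.X ^ (p.1 + (mx : ℤ)).toNat *
    Polynomial.C (if (q.2 + (my : ℤ)).toNat = (p.2 + (my : ℤ)).toNat then 1 else 0)
  have hH : H = 0 := by
    refine (transcendental_iff.1 hx) H ?_
    rw [← map_zero (algebraMap E K), ← hcoeff]
    simp only [H, map_sum, map_mul, map_pow, Polynomial.aeval_C, Polynomial.aeval_X, hu, hE]
    refine Finset.sum_congr rfl fun p _ => ?_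
    split_ifs <;> simp
  have hHq := congrArg (fun f => f.coeff (q.1 + (mx : ℤ)).toNat) hH
  simp only [H, Polynomial.finsetSum_coeff, Polynomial.coeff_mul_C, Polynomial.coeff_C_mul,
    Polynomial.coeff_X_pow, Polynomial.coeff_zero] at hHq
  rw [Finset.sum_eq_single q _ (absurd hq)] at hHq
  · exact hw q hq (by simpa using hHq)
  · intro p hp hpq
    have := hX p hp
    have := hX q hq
    have := hY p hp
    have := hY q hq
    have : ¬ (p.1 = q.1 ∧ p.2 = q.2) := fun h => hpq (Prod.ext h.1 h.2)
    split_ifs <;> lia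

end StepEval

/-- The generators of `k(a,s)` viewed inside it, with `s` replaced by its inverse. -/
lemma generators_adjoin_pair_inv {K : Type} [Field K] [Algebra ℂ K] (M : IntermediateField ℂ K)
    {a s : K} (hM : M = adjoin ℂ {a, s}) (ha : a ∈ M) (hs : s⁻¹ ∈ M)
    (hat : Transcendental ℂ a) (hst : Transcendental ℂ⟮a⟯ s) :
    AlgebraicIndependent ℂ ![(⟨a, ha⟩ : M), ⟨s⁻¹, hs⟩] ∧
      adjoin ℂ {(⟨a, ha⟩ : M), ⟨s⁻¹, hs⟩} = ⊤ := by
  constructor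
  · have h := algebraicIndependent_pair_iff.2 ⟨hat, transcendental_inv hst⟩
    refine AlgebraicIndependent.of_comp M.val ?_
    have hval : M.val ∘ ![(⟨a, ha⟩ : M), ⟨s⁻¹, hs⟩] = ![a, s⁻¹] := by
      ext i; fin_cases i <;> rfl
    rw [hval]
    exact h
  · apply lift_injective
    rw [lift_adjoin, lift_top, Set.image_pair]
    refine le_antisymm ?_ ?_
    · rw [adjoin_le_iff]
      rintro z (rfl | rfl)
      exacts [ha, hs]
    · conv_lhs => rw [hM]
      rw [adjoin_le_iff]
      rintro z (rfl | rfl)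
      · exact subset_adjoin ℂ _ (Set.mem_insert _ _)
      · exact inv_mem_iff.1 (subset_adjoin ℂ _ (Set.mem_insert_of_mem _ rfl))

/-- The specialization `K̃(x,Y,1/S(x,y))` is irreducible in `k(x)[Y]`,
and the specialization `K̃(X,y,1/S(x,y))` is irreducible in `k(y)[X]`. -/
theorem stmt2 {K : Type} [Field K] [Algebra ℂ K]
    (St : Finset (ℤ × ℤ)) (w : ℤ × ℤ → ℂ) (x y : K) (mx my : ℕ)
    (hset : Setting St w x y) (hb : ExponentBounds St mx my) :
    Irreducible (kernelAtX St w mx my x y) ∧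
    Irreducible (kernelAtY St w mx my x y) := by
  have hyx : AlgebraicIndependent ℂ ![y, x] := by
    convert hset.indep.comp _ (Equiv.swap (0 : Fin 2) 1).injective using 1
    ext i; fin_cases i <;> simp
  have hSx : Transcendental ℂ⟮x⟯ (stepEval St w x y) :=
    transcendental_stepEval hset.weight_ne hset.notUniv.2 hb.lowerX hb.lowerY hset.indep
  have hSy : Transcendental ℂ⟮y⟯ (stepEval St w x y) := by
    rw [← stepEval_swap]
    refine transcendental_stepEval (mx := my) (my := mx) ?_ ?_ ?_ ?_ hyx
    · simpa using fun a b h => hset.weight_ne _ h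
    · obtain ⟨p, hp, q, hq, hpq⟩ := hset.notUniv.1
      exact ⟨p.swap, by simpa using hp, q.swap, by simpa using hq, hpq⟩
    · simpa using fun a b h => hb.lowerY _ h
    · simpa using fun a b h => hb.lowerX _ h
  have hirr := irreducible_kernelPoly hset.weight_ne hb
  constructor
  · obtain ⟨hind, hgen⟩ := generators_adjoin_pair_inv (kxF St w x y) rfl (x_mem_kxF St w x y)
      (inv_mem (S_mem_kxF St w x y)) (algebraicIndependent_pair_iff.1 hset.indep).1 hSx
    let e : Fin 3 ≃ Fin 3 := Equiv.swap 0 1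
    have h := irreducible_aeval_of_algebraicIndependent _ _ hind hgen
      (MvPolynomial.rename e (kernelPoly St w mx my))
      ((MulEquiv.irreducible_iff (MvPolynomial.renameEquiv ℂ e)).2 hirr)
      (by
        have := MvPolynomial.degreeOf_rename_of_injective (p := kernelPoly St w mx my)
          e.injective 1
        rw [show e 1 = 0 by simp [e]] at this
        rw [this]
        exact degreeOf_one_kernelPoly_ne_zero hset.weight_ne hset.notUniv hb)
    rw [MvPolynomial.aeval_rename] at h
    have hvec : ∀ p q r : Polynomial (kxF St w x y), ![p, q, r] ∘ e = ![q, p, r] := by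
      intro p q r
      ext i : 1
      fin_cases i <;> rfl
    rw [hvec] at h
    exact h
  · obtain ⟨hind, hgen⟩ := generators_adjoin_pair_inv (kyF St w x y) rfl (y_mem_kyF St w x y)
      (inv_mem (S_mem_kyF St w x y)) (algebraicIndependent_pair_iff.1 hyx).1 hSy
    exact irreducible_aeval_of_algebraicIndependent _ _ hind hgen _ hirr
      (degreeOf_zero_kernelPoly_ne_zero hset.weight_ne hset.notUniv hb)

end QuadrantWalk
end
end

section
/- k(𝒪) is the smallest subfield of 𝕂 that is simultaneously a Galois extension of k(x) and a Galois extension of k(y): k(𝒪) is Galois over k(x) and over k(y), and every subfield M ⊆ 𝕂 containing k(x) and k(y) that is Galois over k(x) and Galois over k(y) contains k(𝒪). -/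
open IntermediateField
open scoped BigOperators Classical

set_option synthInstance.maxHeartbeats 1000000
set_option maxHeartbeats 1600000

noncomputable section

namespace QuadrantWalk

section Field

variable {ι F K : Type*} [Field F] [Field K] [Algebra F K]

/-- Coefficients of a Laurent polynomial are determined by its value at a transcendental element. -/
lemma sum_filter_eq_of_sum_zpow_eq {b : K} (hb : Transcendental F b) (T : Finset ι)
    (c : ι → F) (g : ι → ℤ) (s : F)
    (h : ∑ p ∈ T, algebraMap F K (c p) * b ^ g p = algebraMap F K s) (n : ℤ) :
    ∑ p ∈ T with g p = n, c p = if n = 0 then s else 0 := by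
  have hb0 : b ≠ 0 := fun h0 => hb (h0 ▸ isAlgebraic_zero)
  obtain ⟨N, hN, hn⟩ : ∃ N : ℕ, (∀ p ∈ T, 0 ≤ g p + N) ∧ 0 ≤ n + N := by
    refine ⟨T.sup (fun p => (g p).natAbs) + n.natAbs, fun p hp => ?_, by omega⟩
    have := Finset.le_sup (f := fun p => (g p).natAbs) hp
    omega
  set P : Polynomial F :=
    ∑ p ∈ T, Polynomial.monomial (g p + N).toNat (c p) - Polynomial.monomial N s with hP
  have hP0 : P = 0 := by
    by_contra hne
    refine hb ⟨P, hne, ?_⟩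
    have key : ∀ p ∈ T, algebraMap F K (c p) * b ^ (g p + N).toNat =
        algebraMap F K (c p) * b ^ g p * b ^ N := by
      intro p hp
      rw [← zpow_natCast b (g p + N).toNat, Int.toNat_of_nonneg (hN p hp), zpow_add₀ hb0,
        zpow_natCast, mul_assoc]
    simp only [hP, map_sub, map_sum, Polynomial.aeval_monomial]
    rw [Finset.sum_congr rfl key, ← Finset.sum_mul, h, sub_self]
  have hcoeff := congrArg (fun Q : Polynomial F => Q.coeff (n + N).toNat) hP0
  simp only [hP, Polynomial.coeff_sub, Polynomial.finsetSum_coeff, Polynomial.coeff_monomial,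
    Polynomial.coeff_zero, sub_eq_zero] at hcoeff
  have e1 : (N = (n + N).toNat) = (n = 0) := by
    apply propext; omega
  rw [Finset.sum_filter]
  simp only [e1] at hcoeff
  rw [← hcoeff]
  refine Finset.sum_congr rfl fun p hp => ?_
  have := hN p hp
  have e2 : (g p = n) = ((g p + N).toNat = (n + N).toNat) := by
    apply propext; omega
  simp only [e2]

/-- If `s` is the value at `(a, b)` of a Laurent polynomial involving the second variable and `a`
is transcendental, then `b` is algebraic over the field generated by `a` and `s`. -/
lemma isAlgebraic_of_sum_zpow_eq {a b s : K} (ha : Transcendental F a)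
    (T : Finset ι) (w : ι → F) (f g : ι → ℤ)
    (hinj : ∀ p ∈ T, ∀ q ∈ T, f p = f q → g p = g q → p = q)
    (hw : ∀ p ∈ T, w p ≠ 0) (hg : ∃ p ∈ T, g p ≠ 0)
    (h : ∑ p ∈ T, algebraMap F K (w p) * a ^ f p * b ^ g p = s) :
    IsAlgebraic (adjoin F {a, s}) b := by
  by_contra hb
  obtain ⟨q, hq, hgq⟩ := hg
  have haL : a ∈ adjoin F {a, s} := subset_adjoin F _ (Set.mem_insert _ _)
  have hsL : s ∈ adjoin F {a, s} := subset_adjoin F _ (Set.mem_insert_of_mem _ rfl)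
  have hz (n : ℤ) : (((⟨a, haL⟩ : adjoin F {a, s}) ^ n : adjoin F {a, s}) : K) = a ^ n :=
    map_zpow₀ (algebraMap (adjoin F {a, s}) K) _ n
  have h1 := sum_filter_eq_of_sum_zpow_eq (F := adjoin F {a, s}) hb T
    (fun p => algebraMap F _ (w p) * (⟨a, haL⟩ : adjoin F {a, s}) ^ f p) g ⟨s, hsL⟩
    (by simpa [hz] using h) (g q)
  rw [if_neg hgq] at h1
  have h2 := sum_filter_eq_of_sum_zpow_eq ha {p ∈ T | g p = g q} w f 0
    (by simpa [hz] using congrArg (algebraMap (adjoin F {a, s}) K) h1) (f q)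
  rw [Finset.sum_eq_single q] at h2
  · exact hw q hq (by simpa using h2)
  · intro p hp hpq
    simp only [Finset.mem_filter] at hp
    exact absurd (hinj p hp.1.1 q hq hp.2 hp.1.2) hpq
  · simp [hq]

lemma isAlgebraic_adjoin_of_forall {S T : Set K} [Algebra.IsAlgebraic (adjoin F S) K]
    (h : ∀ z ∈ S, IsAlgebraic (adjoin F T) z) : Algebra.IsAlgebraic (adjoin F T) K := by
  refine ⟨fun z => isAlgebraic_adjoin_iff.mpr (IsAlgebraic.adjoin_of_forall_isAlgebraic
    (fun u hu => isAlgebraic_adjoin_iff.mp (h u hu.1))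
    (isAlgebraic_adjoin_iff.mp (Algebra.IsAlgebraic.isAlgebraic (R := adjoin F S) z)))⟩

lemma isAlgebraic_of_mem_adjoin {T : Set K} {z : K} (h : z ∈ adjoin F T) :
    IsAlgebraic (adjoin F T) z :=
  isAlgebraic_algebraMap (⟨z, h⟩ : adjoin F T)

/-- A transcendence basis of `K` can be mapped to any algebraically independent family of an
algebraically closed field. -/
lemma exists_algHom_apply_eq {L : Type*} [Field L] [Algebra F L] [IsAlgClosed L] {z : ι → K}
    {z' : ι → L} (hz : IsTranscendenceBasis F z) (hz' : AlgebraicIndependent F z') :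
    ∃ φ : K →ₐ[F] L, ∀ i, φ (z i) = z' i := by
  let A := Algebra.adjoin F (Set.range z)
  let e : A →ₐ[F] L := (MvPolynomial.aeval z').comp (hz.1.aevalEquiv.symm : A →ₐ[F] _)
  have he : Function.Injective e :=
    Function.Injective.comp (g := MvPolynomial.aeval z') hz' hz.1.aevalEquiv.symm.injective
  let : Algebra A L := e.toRingHom.toAlgebra
  have : IsScalarTower F A L := IsScalarTower.of_algebraMap_eq fun r => (e.commutes r).symm
  have : FaithfulSMul A L := (faithfulSMul_iff_algebraMap_injective A L).mpr he
  have : Algebra.IsAlgebraic A K := hz.isAlgebraic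
  refine ⟨(IsAlgClosed.lift (R := A) (S := K) (M := L)).restrictScalars F, fun i => ?_⟩
  have h1 : z i = algebraMap A K (hz.1.aevalEquiv (MvPolynomial.X i)) := by simp
  rw [AlgHom.restrictScalars_apply, h1, AlgHom.commutes]
  change MvPolynomial.aeval z' (hz.1.aevalEquiv.symm (hz.1.aevalEquiv (MvPolynomial.X i))) = _
  simp

/-- If `K` is algebraic over `F(T)` and over `F(x, y)`, with `x, y` algebraically independent, and
`T ⊆ F(u, v)`, then some automorphism of `K` over `F(T)` maps `(x, y)` to `(u, v)`, as soon as any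
homomorphism doing so fixes `T`. -/
lemma exists_algEquiv_adjoin [IsAlgClosed K] {x y : K} (hxy : AlgebraicIndependent F ![x, y])
    [Algebra.IsAlgebraic (adjoin F {x, y}) K] (T : Set K) [Algebra.IsAlgebraic (adjoin F T) K]
    (u v : K) (hT : T ⊆ adjoin F {u, v})
    (hfix : ∀ φ : K →ₐ[F] K, φ x = u → φ y = v → ∀ t ∈ T, φ t = t) :
    ∃ ρ : K ≃ₐ[adjoin F T] K, ρ x = u ∧ ρ y = v := by
  have hrange : ∀ p q : K, Set.range ![p, q] = {p, q} := fun p q => by simp [Set.pair_comm]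
  have hxyb : IsTranscendenceBasis F ![x, y] := by
    rw [hxy.isTranscendenceBasis_iff_isAlgebraic, ← isAlgebraic_adjoin_iff_top, hrange]
    infer_instance
  have huv : AlgebraicIndependent F ![u, v] := by
    have : Algebra.IsAlgebraic (adjoin F {u, v}) K :=
      isAlgebraic_adjoin_of_forall (S := T) fun t ht => isAlgebraic_of_mem_adjoin (hT ht)
    have : Algebra.IsAlgebraic (Algebra.adjoin F (Set.range ![u, v])) K := by
      rw [← isAlgebraic_adjoin_iff_top, hrange]
      infer_instance
    refine (Algebra.IsAlgebraic.isTranscendenceBasis_of_lift_le_trdeg_of_finite F ![u, v] ?_).1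
    exact hxyb.lift_cardinalMk_eq_trdeg.le
  obtain ⟨φ, hφ⟩ := exists_algHom_apply_eq hxyb huv
  have hx : φ x = u := hφ 0
  have hy : φ y = v := hφ 1
  have hle (r : K) (hr : r ∈ adjoin F T) : φ r = r := by
    induction hr using adjoin_induction with
    | mem t ht => exact hfix φ hx hy t ht
    | algebraMap r => exact φ.commutes r
    | add r s _ _ hr hs => rw [map_add, hr, hs]
    | inv r _ hr => rw [map_inv₀, hr]
    | mul r s _ _ hr hs => rw [map_mul, hr, hs]
  let ψ : K →ₐ[adjoin F T] K := { φ.toRingHom with commutes' := fun r => hle r r.2 }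
  exact ⟨AlgEquiv.ofBijective ψ (Algebra.IsAlgebraic.algHom_bijective ψ), hx, hy⟩

end Field

section Orbit

variable {K : Type} [Field K] [Algebra ℂ K] (St : Finset (ℤ × ℤ)) (w : ℤ × ℤ → ℂ)

lemma map_stepEval {L : Type} [Field L] [Algebra ℂ L] (φ : K →ₐ[ℂ] L) (u v : K) :
    φ (stepEval St w u v) = stepEval St w (φ u) (φ v) := by
  simp [stepEval, map_zpow₀]

lemma stepEval_mem_adjoin (u v : K) : stepEval St w u v ∈ adjoin ℂ {u, v} := by
  have hu : u ∈ adjoin ℂ {u, v} := subset_adjoin ℂ _ (Set.mem_insert _ _)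
  have hv : v ∈ adjoin ℂ {u, v} := subset_adjoin ℂ _ (Set.mem_insert_of_mem _ rfl)
  exact sum_mem fun p _ => mul_mem (mul_mem (_root_.algebraMap_mem _ _) (zpow_mem hu _)) (zpow_mem hv _)

variable {St w}

lemma Adj.map (φ : K →ₐ[ℂ] K) {a b : K × K} (h : Adj St w a b) :
    Adj St w (φ a.1, φ a.2) (φ b.1, φ b.2) := by
  rcases h with ⟨h, hS⟩ | ⟨h, hS⟩
  · exact Or.inl ⟨congrArg φ h, by simp only [← map_stepEval, hS]⟩
  · exact Or.inr ⟨congrArg φ h, by simp only [← map_stepEval, hS]⟩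

variable {x y : K}

lemma map_mem_orbit (φ : K →ₐ[ℂ] K) (hφ : Adj St w (x, y) (φ x, φ y)) {a : K × K}
    (ha : a ∈ orbit St w x y) : (φ a.1, φ a.2) ∈ orbit St w x y :=
  Relation.ReflTransGen.head hφ
    (Relation.ReflTransGen.lift (fun a : K × K => (φ a.1, φ a.2)) (fun _ _ h => Adj.map φ h) _ _ ha)

/-- A `ℂ`-endomorphism mapping `(x, y)` to an adjacent pair preserves `k(𝒪)`. -/
lemma map_mem_orbitF (φ : K →ₐ[ℂ] K) (hφ : Adj St w (x, y) (φ x, φ y)) {z : K}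
    (hz : z ∈ orbitF St w x y) : φ z ∈ orbitF St w x y := by
  have hle : orbitF St w x y ≤ (orbitF St w x y).comap φ := by
    refine adjoin_le_iff.mpr ?_
    rintro z (rfl | ⟨a, ha, h⟩)
    · have hS : stepEval St w x y = stepEval St w (φ x) (φ y) := by
        rcases hφ with h | h <;> exact h.2
      change φ (stepEval St w x y) ∈ orbitF St w x y
      rw [map_stepEval, ← hS]
      exact S_mem_orbitF St w x y
    · refine subset_adjoin ℂ _ (Or.inr ⟨_, map_mem_orbit φ hφ ha, ?_⟩)
      exact h.imp (congrArg φ) (congrArg φ)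
  exact hle hz

lemma Setting.isAlgebraic_kxF (h : Setting St w x y) : Algebra.IsAlgebraic (kxF St w x y) K := by
  have : Algebra.IsAlgebraic (adjoin ℂ {x, y}) K := h.algebraic
  refine isAlgebraic_adjoin_of_forall (S := {x, y}) ?_
  rintro z (rfl | rfl)
  · exact isAlgebraic_of_mem_adjoin (x_mem_kxF St w z y)
  · refine isAlgebraic_of_sum_zpow_eq (h.indep.transcendental 0) St w Prod.fst Prod.snd
      (fun p _ q _ h1 h2 => Prod.ext h1 h2) h.weight_ne ?_ rfl
    obtain ⟨p, hp, q, hq, hne⟩ := h.notUniv.2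
    by_cases hp0 : p.2 = 0
    · exact ⟨q, hq, fun hq0 => hne (hp0.trans hq0.symm)⟩
    · exact ⟨p, hp, hp0⟩

lemma Setting.isAlgebraic_kyF (h : Setting St w x y) : Algebra.IsAlgebraic (kyF St w x y) K := by
  have : Algebra.IsAlgebraic (adjoin ℂ {x, y}) K := h.algebraic
  refine isAlgebraic_adjoin_of_forall (S := {x, y}) ?_
  rintro z (rfl | rfl)
  · refine isAlgebraic_of_sum_zpow_eq (h.indep.transcendental 1) St w Prod.snd Prod.fst
      (fun p _ q _ h1 h2 => Prod.ext h2 h1) h.weight_ne ?_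
      (Finset.sum_congr rfl fun p _ => mul_right_comm _ _ _)
    obtain ⟨p, hp, q, hq, hne⟩ := h.notUniv.1
    by_cases hp0 : p.1 = 0
    · exact ⟨q, hq, fun hq0 => hne (hp0.trans hq0.symm)⟩
    · exact ⟨p, hp, hp0⟩
  · exact isAlgebraic_of_mem_adjoin (y_mem_kyF St w x z)

/-- An intermediate field stable under all automorphisms over `E` is Galois over `E`. -/
lemma isGalois_extendScalars_iff [IsAlgClosed K] {E M : IntermediateField ℂ K}
    [Algebra.IsAlgebraic E K] (h : E ≤ M) :
    IsGalois E (extendScalars h) ↔ ∀ σ : K ≃ₐ[E] K, ∀ z ∈ M, σ z ∈ M := by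
  have : IsAlgClosure E K := ⟨inferInstance, inferInstance⟩
  have : Normal E K := IsAlgClosure.normal E K
  have hN : Normal E (extendScalars h) ↔ ∀ σ : K ≃ₐ[E] K, ∀ z ∈ M, σ z ∈ M := by
    rw [normal_iff_forall_map_le']
    refine forall_congr' fun σ => ⟨fun hσ z hz => hσ ⟨z, hz, rfl⟩, ?_⟩
    rintro hσ _ ⟨z, hz, rfl⟩
    exact hσ z hz
  rw [← hN]
  refine ⟨fun _ => IsGalois.to_normal, fun _ => ?_⟩
  have : CharZero E := charZero_of_injective_algebraMap (algebraMap ℂ E).injective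
  exact IsGalois.mk

/-- Every pair adjacent to `(x, y)` is its image under an automorphism of `K` preserving every
subfield that is Galois over both `k(x)` and `k(y)`. -/
lemma Setting.exists_algEquiv_of_adj (h : Setting St w x y) {M : IntermediateField ℂ K}
    (h1 : kxF St w x y ≤ M) (h2 : kyF St w x y ≤ M)
    (hG1 : IsGalois (kxF St w x y) (extendScalars h1))
    (hG2 : IsGalois (kyF St w x y) (extendScalars h2)) {u v : K}
    (hadj : Adj St w (x, y) (u, v)) :
    ∃ ρ : K ≃ₐ[ℂ] K, ρ x = u ∧ ρ y = v ∧ ∀ z ∈ M, ρ z ∈ M := by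
  have : IsAlgClosed K := h.algClosed
  have : Algebra.IsAlgebraic (adjoin ℂ {x, y}) K := h.algebraic
  have := h.isAlgebraic_kxF
  have := h.isAlgebraic_kyF
  have : Algebra.IsAlgebraic (adjoin ℂ {x, stepEval St w x y}) K := h.isAlgebraic_kxF
  have : Algebra.IsAlgebraic (adjoin ℂ {y, stepEval St w x y}) K := h.isAlgebraic_kyF
  have hSuv : stepEval St w u v = stepEval St w x y := by
    rcases hadj with h | h <;> exact h.2.symm
  have hSmem : stepEval St w x y ∈ adjoin ℂ {u, v} := hSuv ▸ stepEval_mem_adjoin St w u v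
  have hSfix : ∀ φ : K →ₐ[ℂ] K, φ x = u → φ y = v → φ (stepEval St w x y) = stepEval St w x y :=
    fun φ hx hy => by rw [map_stepEval, hx, hy, hSuv]
  rcases hadj with ⟨hxu, -⟩ | ⟨hyv, -⟩
  · obtain rfl : x = u := hxu
    obtain ⟨ρ, hx, hy⟩ := exists_algEquiv_adjoin h.indep {x, stepEval St w x y} x v
      (Set.insert_subset (subset_adjoin ℂ _ (Set.mem_insert _ _))
        (Set.singleton_subset_iff.mpr hSmem))
      (by
        rintro φ hx hy t (rfl | rfl)
        exacts [hx, hSfix φ hx hy])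
    exact ⟨ρ.restrictScalars ℂ, hx, hy, (isGalois_extendScalars_iff h1).mp hG1 ρ⟩
  · obtain rfl : y = v := hyv
    obtain ⟨ρ, hx, hy⟩ := exists_algEquiv_adjoin h.indep {y, stepEval St w x y} u y
      (Set.insert_subset (subset_adjoin ℂ _ (Set.mem_insert_of_mem _ rfl))
        (Set.singleton_subset_iff.mpr hSmem))
      (by
        rintro φ hx hy t (rfl | rfl)
        exacts [hy, hSfix φ hx hy])
    exact ⟨ρ.restrictScalars ℂ, hx, hy, (isGalois_extendScalars_iff h2).mp hG2 ρ⟩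

/-- Every element of the orbit is the image of `(x, y)` under an automorphism of `K` preserving
every subfield that is Galois over both `k(x)` and `k(y)`. -/
lemma Setting.exists_algEquiv_of_mem_orbit (h : Setting St w x y) {M : IntermediateField ℂ K}
    (h1 : kxF St w x y ≤ M) (h2 : kyF St w x y ≤ M)
    (hG1 : IsGalois (kxF St w x y) (extendScalars h1))
    (hG2 : IsGalois (kyF St w x y) (extendScalars h2)) {a : K × K} (ha : a ∈ orbit St w x y) :
    ∃ τ : K ≃ₐ[ℂ] K, τ x = a.1 ∧ τ y = a.2 ∧ ∀ z ∈ M, τ z ∈ M := by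
  induction ha with
  | refl => exact ⟨AlgEquiv.refl, rfl, rfl, fun _ hz => hz⟩
  | @tail b c _ hbc ih =>
    obtain ⟨τ, hx, hy, hM⟩ := ih
    have hadj : Adj St w (x, y) (τ.symm c.1, τ.symm c.2) := by
      have := Adj.map (τ.symm : K →ₐ[ℂ] K) hbc
      simpa [← hx, ← hy] using this
    obtain ⟨ρ, hρx, hρy, hρM⟩ := h.exists_algEquiv_of_adj h1 h2 hG1 hG2 hadj
    exact ⟨ρ.trans τ, by simp [hρx], by simp [hρy], fun z hz => hM _ (hρM z hz)⟩

end Orbit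

/-- `k(𝒪)` is the smallest subfield of `𝕂` that is Galois over `k(x)`
and over `k(y)`. -/
theorem stmt8 {K : Type} [Field K] [Algebra ℂ K]
    (St : Finset (ℤ × ℤ)) (w : ℤ × ℤ → ℂ) (x y : K)
    (hset : Setting St w x y) :
    (∃ (h1 : kxF St w x y ≤ orbitF St w x y)
       (h2 : kyF St w x y ≤ orbitF St w x y),
       IsGalois ↥(kxF St w x y) ↥(extendScalars h1) ∧
       IsGalois ↥(kyF St w x y) ↥(extendScalars h2)) ∧
    (∀ (M : IntermediateField ℂ K) (h1 : kxF St w x y ≤ M)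
       (h2 : kyF St w x y ≤ M),
       IsGalois ↥(kxF St w x y) ↥(extendScalars h1) →
       IsGalois ↥(kyF St w x y) ↥(extendScalars h2) →
       orbitF St w x y ≤ M) := by
  have : IsAlgClosed K := hset.algClosed
  have := hset.isAlgebraic_kxF
  have := hset.isAlgebraic_kyF
  refine ⟨⟨?_, ?_, ?_, ?_⟩, ?_⟩
  · refine adjoin_le_iff.mpr ?_
    rintro z (rfl | rfl)
    exacts [x_mem_orbitF St w z y, S_mem_orbitF St w x y]
  · refine adjoin_le_iff.mpr ?_
    rintro z (rfl | rfl)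
    exacts [y_mem_orbitF St w x z, S_mem_orbitF St w x y]
  · refine (isGalois_extendScalars_iff _).mpr fun σ z hz => ?_
    have hx : σ x = x := σ.commutes ⟨x, x_mem_kxF St w x y⟩
    have hS : σ (stepEval St w x y) = stepEval St w x y := σ.commutes ⟨_, S_mem_kxF St w x y⟩
    refine map_mem_orbitF ((σ.restrictScalars ℂ : K ≃ₐ[ℂ] K) : K →ₐ[ℂ] K) (Or.inl ⟨hx.symm, ?_⟩) hz
    exact hS.symm.trans (map_stepEval St w ((σ.restrictScalars ℂ : K ≃ₐ[ℂ] K) : K →ₐ[ℂ] K) x y)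
  · refine (isGalois_extendScalars_iff _).mpr fun σ z hz => ?_
    have hy : σ y = y := σ.commutes ⟨y, y_mem_kyF St w x y⟩
    have hS : σ (stepEval St w x y) = stepEval St w x y := σ.commutes ⟨_, S_mem_kyF St w x y⟩
    refine map_mem_orbitF ((σ.restrictScalars ℂ : K ≃ₐ[ℂ] K) : K →ₐ[ℂ] K) (Or.inr ⟨hy.symm, ?_⟩) hz
    exact hS.symm.trans (map_stepEval St w ((σ.restrictScalars ℂ : K ≃ₐ[ℂ] K) : K →ₐ[ℂ] K) x y)
  · intro M h1 h2 hG1 hG2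
    refine adjoin_le_iff.mpr ?_
    rintro z (rfl | ⟨a, ha, h⟩)
    · exact h1 (S_mem_kxF St w x y)
    · obtain ⟨τ, hx, hy, hM⟩ := hset.exists_algEquiv_of_mem_orbit h1 h2 hG1 hG2 ha
      rcases h with rfl | rfl
      · exact hx ▸ hM x (h1 (x_mem_kxF St w x y))
      · exact hy ▸ hM y (h2 (y_mem_kyF St w x y))

end QuadrantWalk
end
end
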